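/- A path with l edges requires at least ⌊l/3⌋ edge editions and vertex splittings to be transformed into a disjoint union of bicliques. -/

import Mathlib

/- Common framework: bipartite graphs on vertex set `ℕ` with side labels,
   edge editions, vertex splittings, and the bicluster-editing numbers. -/

namespace BCE

/-- A graph on a finite subset of `ℕ` equipped with a labelling of its
vertices into two sides `A` and `B`. -/
structure BGraph where
  A : Set ℕ
  B : Set ℕ
  finA : A.Finite
  finB : B.Finite
  Adj : ℕ → ℕ → Prop
  symm : ∀ u v, Adj u v → Adj v u

/-- The vertex set of a graph. -/
def verts (G : BGraph) : Set ℕ := G.A ∪ G.B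

/-- The open neighbourhood of a vertex. -/
def nbhd (G : BGraph) (v : ℕ) : Set ℕ := {u | G.Adj v u}

/-- `G = (A, B, E)` is bipartite: the sides are disjoint and every edge joins
a vertex of `A` with a vertex of `B`. -/
def Bipartite (G : BGraph) : Prop :=
  Disjoint G.A G.B ∧
    ∀ u v, G.Adj u v → (u ∈ G.A ∧ v ∈ G.B) ∨ (u ∈ G.B ∧ v ∈ G.A)

/-- A (bipartite) graph is a disjoint union of bicliques iff whenever
`a-b-c-d` is a walk, `a` and `d` are adjacent (equivalently, every connected
component is a complete bipartite graph). -/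
def IsBicliqueUnion (G : BGraph) : Prop :=
  ∀ a b c d, G.Adj a b → G.Adj b c → G.Adj c d → G.Adj a d

/-- The editing operations: deletion of an edge, addition of an edge, and
splitting of a vertex `v` into `v` and a fresh vertex `v'` whose
neighbourhoods `N1`, `N2` cover the neighbourhood of `v`. -/
inductive Op where
  | del : ℕ → ℕ → Op
  | add : ℕ → ℕ → Op
  | split : ℕ → ℕ → Set ℕ → Set ℕ → Op

/-- `op` is a vertex splitting. -/
def IsSplitOp : Op → Prop
  | Op.split _ _ _ _ => True
  | _ => False

/-- `OpStep sA sB op G G'` : performing the single operation `op` on `G`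
yields `G'`; vertex splittings are allowed on side `A` (resp. `B`) only if
`sA` (resp. `sB`) is `true`.  A copy created by a splitting is put on the
same side as the split vertex. -/
inductive OpStep (sA sB : Bool) : Op → BGraph → BGraph → Prop where
  | del {G G' : BGraph} {u v : ℕ}
      (h : G.Adj u v) (hA : G'.A = G.A) (hB : G'.B = G.B)
      (hadj : ∀ x y, G'.Adj x y ↔
        (G.Adj x y ∧ ¬((x = u ∧ y = v) ∨ (x = v ∧ y = u)))) :
      OpStep sA sB (Op.del u v) G G'
  | add {G G' : BGraph} {u v : ℕ}
      (hu : u ∈ G.A) (hv : v ∈ G.B) (h : ¬ G.Adj u v)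
      (hA : G'.A = G.A) (hB : G'.B = G.B)
      (hadj : ∀ x y, G'.Adj x y ↔
        (G.Adj x y ∨ (x = u ∧ y = v) ∨ (x = v ∧ y = u))) :
      OpStep sA sB (Op.add u v) G G'
  | split {G G' : BGraph} {v v' : ℕ} {N1 N2 : Set ℕ}
      (hside : (v ∈ G.A ∧ sA = true) ∨ (v ∈ G.B ∧ sB = true))
      (hfresh : v' ∉ verts G)
      (hcover : N1 ∪ N2 = nbhd G v)
      (hA : v ∈ G.A → G'.A = insert v' G.A ∧ G'.B = G.B)
      (hB : v ∈ G.B → G'.A = G.A ∧ G'.B = insert v' G.B)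
      (hadj : ∀ x y, G'.Adj x y ↔
        ((G.Adj x y ∧ x ≠ v ∧ y ≠ v) ∨ (x = v ∧ y ∈ N1) ∨ (y = v ∧ x ∈ N1) ∨
          (x = v' ∧ y ∈ N2) ∨ (y = v' ∧ x ∈ N2))) :
      OpStep sA sB (Op.split v v' N1 N2) G G'

/-- `ApplySeq sA sB L G G'` : applying the sequence of operations `L`
to `G` yields `G'`. -/
def ApplySeq (sA sB : Bool) : List Op → BGraph → BGraph → Prop
  | [], G, G' => G' = G
  | op :: L, G, G'' => ∃ G', OpStep sA sB op G G' ∧ ApplySeq sA sB L G' G''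

/-- The sequence `L` transforms `G` into a disjoint union of bicliques. -/
def Solves (sA sB : Bool) (L : List Op) (G : BGraph) : Prop :=
  ∃ G', ApplySeq sA sB L G G' ∧ IsBicliqueUnion G'

/-- `bcevs G` : the minimum length of a sequence of edge editions and vertex
splittings transforming `G` into a disjoint union of bicliques. -/
noncomputable def bcevs (G : BGraph) : ℕ :=
  sInf {n | ∃ L, L.length = n ∧ Solves true true L G}

/-- `bceovs G` (that is, `bceovs(G, A)`) : the minimum length of such a
sequence in which vertex splittings are applied only to vertices of the side
`A` (and their copies, which are also on side `A`). -/
noncomputable def bceovs (G : BGraph) : ℕ :=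
  sInf {n | ∃ L, L.length = n ∧ Solves true false L G}

/-- The subgraph of `G` induced by `S`. -/
def induce (G : BGraph) (S : Set ℕ) : BGraph where
  A := G.A ∩ S
  B := G.B ∩ S
  finA := G.finA.subset Set.inter_subset_left
  finB := G.finB.subset Set.inter_subset_left
  Adj := fun u v => G.Adj u v ∧ u ∈ S ∧ v ∈ S
  symm := fun u v h => ⟨G.symm u v h.1, h.2.2, h.2.1⟩

/-- `G` is a tree (as an abstract graph on its vertex set). -/
def IsTreeB (G : BGraph) : Prop :=
  (SimpleGraph.induce (verts G) (SimpleGraph.fromRel G.Adj)).IsTree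

/-- `G` is connected. -/
def ConnectedB (G : BGraph) : Prop :=
  (SimpleGraph.induce (verts G) (SimpleGraph.fromRel G.Adj)).Connected

/-- The set `S` induces a biclique in `G`: every vertex of `S` on side `A` is
adjacent to every vertex of `S` on side `B`. -/
def IsBicliqueOn (G : BGraph) (S : Set ℕ) : Prop :=
  ∀ u ∈ S ∩ G.A, ∀ v ∈ S ∩ G.B, G.Adj u v

/-- The set `S` induces a star in `G`: some centre `c ∈ S` is adjacent to all
other vertices of `S`, and every edge inside `S` uses the centre. -/
def IsStarOn (G : BGraph) (S : Set ℕ) : Prop :=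
  ∃ c ∈ S, (∀ v ∈ S, v ≠ c → G.Adj c v) ∧
    (∀ u ∈ S, ∀ v ∈ S, G.Adj u v → u = c ∨ v = c)

/-- An `A`-partitioning cover of `G`: a collection of subsets of `A ∪ B`
covering all vertices whose traces on `A` form a partition of `A` (every
vertex of `A` lies in a unique member of the collection). -/
def IsAPartCover (G : BGraph) (C : Set (Set ℕ)) : Prop :=
  (∀ X ∈ C, X ⊆ verts G) ∧
  (∀ v ∈ verts G, ∃ X ∈ C, v ∈ X) ∧
  (∀ a ∈ G.A, ∃! X, X ∈ C ∧ a ∈ X)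

/-- The cost of an `A`-partitioning cover: each `a ∈ A` lying in the unique
set `X ∈ C` costs `|(B ∩ X) \ N(a)| + |N(a) \ X|`; each `b ∈ B` lying in `j`
members of `C` costs `j - 1`. -/
noncomputable def coverCost (G : BGraph) (C : Set (Set ℕ)) : ℕ :=
  (∑ᶠ a ∈ G.A, ∑ᶠ X ∈ {X ∈ C | a ∈ X},
      (((G.B ∩ X) \ nbhd G a).ncard + ((nbhd G a) \ X).ncard)) +
  ∑ᶠ b ∈ G.B, ({X ∈ C | b ∈ X}.ncard - 1)

/-- The twin class of a vertex: all vertices of `G` with the same open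
neighbourhood. -/
def twinClass (G : BGraph) (v : ℕ) : Set ℕ :=
  {u ∈ verts G | nbhd G u = nbhd G v}

/-- The twin classes of `G`. -/
def twinClasses (G : BGraph) : Set (Set ℕ) :=
  {T | ∃ v ∈ verts G, T = twinClass G v}

/-- A cover is twin-adapted if every member contains each twin class either
entirely or not at all. -/
def TwinAdapted (G : BGraph) (C : Set (Set ℕ)) : Prop :=
  ∀ T ∈ twinClasses G, ∀ X ∈ C, T ∩ X = ∅ ∨ T ⊆ X

/-- `G` is a cycle with consecutive vertices `p 0, p 1, …, p (m-1)`
(indices modulo `m`), the vertices of even index forming side `A`. -/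
def IsCycleWith (G : BGraph) (p : ℕ → ℕ) (m : ℕ) : Prop :=
  (∀ i j, i < m → j < m → p i = p j → i = j) ∧
  G.A = p '' {i | i < m ∧ i % 2 = 0} ∧
  G.B = p '' {i | i < m ∧ i % 2 = 1} ∧
  (∀ x y, G.Adj x y ↔ ∃ i < m,
    (x = p i ∧ y = p ((i + 1) % m)) ∨ (y = p i ∧ x = p ((i + 1) % m)))

/-- `G` is a path with `l` edges and consecutive vertices `p 0, …, p l`,
the vertices of even index forming side `A`. -/
def IsPathWith (G : BGraph) (p : ℕ → ℕ) (l : ℕ) : Prop :=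
  (∀ i j, i ≤ l → j ≤ l → p i = p j → i = j) ∧
  G.A = p '' {i | i ≤ l ∧ i % 2 = 0} ∧
  G.B = p '' {i | i ≤ l ∧ i % 2 = 1} ∧
  (∀ x y, G.Adj x y ↔ ∃ i < l,
    (x = p i ∧ y = p (i + 1)) ∨ (y = p i ∧ x = p (i + 1)))

end BCE

namespace BCE

/-- Every edge of `G` joins two vertices of `G`. -/
def EdgesInVerts (G : BGraph) : Prop :=
  ∀ x y, G.Adj x y → x ∈ verts G

/-- The quadruples `(a j, b j, c j, d j)`, `j ∈ J`, are walks `a-b-c-d` of `G` with non-adjacent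
ends. Inner vertices belong to one quadruple only, and no two quadruples have the same pair of
ends. -/
structure IsPacking (G : BGraph) (J : Finset ℕ) (a b c d : ℕ → ℕ) : Prop where
  adj_ab : ∀ j ∈ J, G.Adj (a j) (b j)
  adj_bc : ∀ j ∈ J, G.Adj (b j) (c j)
  adj_cd : ∀ j ∈ J, G.Adj (c j) (d j)
  not_adj_ad : ∀ j ∈ J, ¬ G.Adj (a j) (d j)
  inner_ne_end : ∀ i ∈ J, ∀ j ∈ J, b i ≠ a j ∧ b i ≠ d j ∧ c i ≠ a j ∧ c i ≠ d j
  inner_inj : ∀ i ∈ J, ∀ j ∈ J, b i = b j ∨ b i = c j ∨ c i = c j → i = j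
  ends_inj : ∀ i ∈ J, ∀ j ∈ J, (a i = a j ∧ d i = d j) ∨ (a i = d j ∧ d i = a j) → i = j

theorem card_le_card_filter_not_add_one (J : Finset ℕ) (P : ℕ → Prop) [DecidablePred P]
    (h : ∀ i ∈ J, ∀ j ∈ J, P i → P j → i = j) :
    J.card ≤ (J.filter fun j => ¬ P j).card + 1 := by
  have h1 : (J.filter P).card ≤ 1 := by
    rw [Finset.card_le_one]
    intro i hi j hj
    rw [Finset.mem_filter] at hi hj
    exact h i hi.1 j hj.1 hi.2 hj.2
  have h2 := Finset.card_filter_add_card_filter_not (s := J) P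
  omega

theorem verts_of_split {G G' : BGraph} {v v' : ℕ} (hv : v ∈ G.A ∨ v ∈ G.B)
    (hA : v ∈ G.A → G'.A = insert v' G.A ∧ G'.B = G.B)
    (hB : v ∈ G.B → G'.A = G.A ∧ G'.B = insert v' G.B) :
    verts G' = insert v' (verts G) := by
  unfold verts
  rcases hv with h | h
  · rw [(hA h).1, (hA h).2, Set.insert_union]
  · rw [(hB h).1, (hB h).2, Set.union_insert]

theorem EdgesInVerts.opStep {sA sB : Bool} {op : Op} {G G' : BGraph}
    (hG : EdgesInVerts G) (h : OpStep sA sB op G G') : EdgesInVerts G' := by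
  intro x y hxy
  cases h with
  | del h hA hB hadj =>
    have := hG x y ((hadj x y).1 hxy).1
    simpa [verts, hA, hB] using this
  | @add _ _ u v hu hv h hA hB hadj =>
    simp only [verts, hA, hB]
    rcases (hadj x y).1 hxy with h | ⟨rfl, -⟩ | ⟨rfl, -⟩
    · exact hG x y h
    · exact Or.inl hu
    · exact Or.inr hv
  | @split _ _ v v' N1 N2 hside hfresh hcover hA hB hadj =>
    have hv : v ∈ verts G := hside.imp And.left And.left
    rw [verts_of_split hv hA hB]
    have hN : ∀ z, z ∈ N1 ∨ z ∈ N2 → z ∈ verts G := fun z hz =>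
      hG z v (G.symm _ _ (show z ∈ nbhd G v from hcover ▸ hz))
    rcases (hadj x y).1 hxy with h | ⟨rfl, -⟩ | ⟨-, h⟩ | ⟨rfl, -⟩ | ⟨-, h⟩
    · exact Or.inr (hG x y h.1)
    · exact Or.inr hv
    · exact Or.inr (hN x (Or.inl h))
    · exact Or.inl rfl
    · exact Or.inr (hN x (Or.inr h))

theorem IsPacking.opStep {sA sB : Bool} {op : Op} {G G' : BGraph} {J : Finset ℕ}
    {a b c d : ℕ → ℕ} (hG : EdgesInVerts G) (hP : IsPacking G J a b c d)
    (h : OpStep sA sB op G G') :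
    ∃ J' a' d', J.card ≤ J'.card + 1 ∧ IsPacking G' J' a' b c d' := by
  classical
  obtain ⟨hab, hbc, hcd, had, hne, hin, hend⟩ := hP
  cases h with
  | @del _ _ u v h hA hB hadj =>
    refine ⟨_, a, d, card_le_card_filter_not_add_one J
      (fun j => ¬ (G'.Adj (a j) (b j) ∧ G'.Adj (b j) (c j) ∧ G'.Adj (c j) (d j))) ?_, ?_⟩
    · intro i hi j hj hbi hbj
      have := hne i hi j hj
      have := hne j hj i hi
      have := hin i hi j hj
      have := hin j hj i hi
      simp only [hadj, hab i hi, hbc i hi, hcd i hi, hab j hj, hbc j hj, hcd j hj,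
        true_and] at hbi hbj
      grind
    · constructor <;> simp only [Finset.mem_filter, not_not] <;> grind
  | @add _ _ u v hu hv h hA hB hadj =>
    refine ⟨_, a, d, card_le_card_filter_not_add_one J (fun j => G'.Adj (a j) (d j)) ?_, ?_⟩
    · intro i hi j hj hbi hbj
      have hi' := ((hadj _ _).1 hbi).resolve_left (had i hi)
      have hj' := ((hadj _ _).1 hbj).resolve_left (had j hj)
      have := hend i hi j hj
      grind
    · constructor <;> simp only [Finset.mem_filter] <;> grind
  | @split _ _ v v' N1 N2 hside hfresh hcover hA hB hadj =>
    have hN : ∀ z, z ∈ N1 ∨ z ∈ N2 ↔ G.Adj v z := fun z => by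
      change z ∈ N1 ∪ N2 ↔ z ∈ nbhd G v
      rw [hcover]
    have hv : v ∈ verts G := hside.imp And.left And.left
    have hvv : v ≠ v' := fun h => hfresh (h ▸ hv)
    have hnot : ∀ x, ¬ G.Adj v' x := fun x hx => hfresh (hG _ _ hx)
    have hnot' : ∀ x, ¬ G.Adj x v' := fun x hx => hnot x (G.symm _ _ hx)
    have hsymm := G.symm
    -- the map contracting `v'` back into `v`
    obtain ⟨π, hπ⟩ : ∃ π : ℕ → ℕ, ∀ x, π x = if x = v' then v else x := ⟨_, fun _ => rfl⟩
    have hproj : ∀ x y, G'.Adj x y → G.Adj (π x) (π y) := by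
      intro x y hxy
      have h1 := hN x
      have h2 := hN y
      have h3 := hN v'
      rw [hπ, hπ]
      rcases (hadj x y).1 hxy with h | h | h | h | h <;> grind
    have hlift : ∀ x y, G.Adj x y → y ≠ v → ∃ x', π x' = x ∧ G'.Adj x' y := by
      intro x y hxy hy
      by_cases hx : x = v
      · subst hx
        rcases (hN y).2 hxy with h | h
        · exact ⟨x, by grind, (hadj _ _).2 (by grind)⟩
        · exact ⟨v', by grind, (hadj _ _).2 (by grind)⟩
      · exact ⟨x, by grind, (hadj _ _).2 (by grind)⟩
    have ha : ∀ j, ∃ x, j ∈ J → b j ≠ v → π x = a j ∧ G'.Adj x (b j) := fun j => by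
      by_cases h : j ∈ J ∧ b j ≠ v
      · obtain ⟨x, hx⟩ := hlift _ _ (hab j h.1) h.2
        exact ⟨x, fun _ _ => hx⟩
      · exact ⟨0, fun h1 h2 => absurd ⟨h1, h2⟩ h⟩
    have hd : ∀ j, ∃ x, j ∈ J → c j ≠ v → π x = d j ∧ G'.Adj (c j) x := fun j => by
      by_cases h : j ∈ J ∧ c j ≠ v
      · obtain ⟨x, hx⟩ := hlift _ _ (G.symm _ _ (hcd j h.1)) h.2
        exact ⟨x, fun _ _ => ⟨hx.1, G'.symm _ _ hx.2⟩⟩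
      · exact ⟨0, fun h1 h2 => absurd ⟨h1, h2⟩ h⟩
    choose a' ha' using ha
    choose d' hd' using hd
    refine ⟨_, a', d', card_le_card_filter_not_add_one J (fun j => b j = v ∨ c j = v) ?_, ?_⟩
    · intro i hi j hj hbi hbj
      have := hin i hi j hj
      have := hin j hj i hi
      grind
    · have hπb : ∀ j ∈ J, π (b j) = b j := fun j hj => by
        have := hbc j hj
        grind
      have hπc : ∀ j ∈ J, π (c j) = c j := fun j hj => by
        have := hcd j hj
        grind
      constructor <;> simp only [Finset.mem_filter, not_or]
      · exact fun j hj => (ha' j hj.1 hj.2.1).2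
      · exact fun j hj => (hadj _ _).2 (Or.inl ⟨hbc j hj.1, hj.2⟩)
      · exact fun j hj => (hd' j hj.1 hj.2.2).2
      · intro j hj h
        have := hproj _ _ h
        rw [(ha' j hj.1 hj.2.1).1, (hd' j hj.1 hj.2.2).1] at this
        exact had j hj.1 this
      · intro i hi j hj
        have := hne i hi.1 j hj.1
        have := ha' j hj.1 hj.2.1
        have := hd' j hj.1 hj.2.2
        have := hπb i hi.1
        have := hπc i hi.1
        grind
      · exact fun i hi j hj => hin i hi.1 j hj.1
      · intro i hi j hj h
        apply hend i hi.1 j hj.1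
        rw [← (ha' i hi.1 hi.2.1).1, ← (hd' i hi.1 hi.2.2).1,
          ← (ha' j hj.1 hj.2.1).1, ← (hd' j hj.1 hj.2.2).1]
        exact h.imp (fun h => ⟨congrArg π h.1, congrArg π h.2⟩)
          (fun h => ⟨congrArg π h.1, congrArg π h.2⟩)

theorem IsPacking.card_le_length {sA sB : Bool} {L : List Op} {G G' : BGraph} {J : Finset ℕ}
    {a b c d : ℕ → ℕ} (hG : EdgesInVerts G) (hP : IsPacking G J a b c d)
    (happ : ApplySeq sA sB L G G') (hbic : IsBicliqueUnion G') : J.card ≤ L.length := by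
  induction L generalizing G J a d with
  | nil =>
    obtain rfl : G' = G := happ
    rcases J.eq_empty_or_nonempty with rfl | ⟨j, hj⟩
    · simp
    · exact absurd (hbic _ _ _ _ (hP.adj_ab j hj) (hP.adj_bc j hj) (hP.adj_cd j hj))
        (hP.not_adj_ad j hj)
  | cons op L ih =>
    obtain ⟨H, hstep, happ⟩ := happ
    obtain ⟨J', a', d', hcard, hP'⟩ := hP.opStep hG hstep
    have := ih (hG.opStep hstep) hP' happ
    rw [List.length_cons]
    omega

theorem IsPathWith.edgesInVerts {G : BGraph} {p : ℕ → ℕ} {l : ℕ} (h : IsPathWith G p l) :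
    EdgesInVerts G := by
  obtain ⟨-, hA, hB, hadj⟩ := h
  have hmem : ∀ i ≤ l, p i ∈ verts G := fun i hi => by
    rcases Nat.mod_two_eq_zero_or_one i with h | h
    · exact Or.inl (hA ▸ ⟨i, ⟨hi, h⟩, rfl⟩)
    · exact Or.inr (hB ▸ ⟨i, ⟨hi, h⟩, rfl⟩)
  intro x y hxy
  obtain ⟨i, hi, ⟨rfl, -⟩ | ⟨-, rfl⟩⟩ := (hadj x y).1 hxy
  · exact hmem i hi.le
  · exact hmem (i + 1) hi

theorem IsPathWith.isPacking {G : BGraph} {p : ℕ → ℕ} {l : ℕ} (h : IsPathWith G p l) :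
    IsPacking G (Finset.range (l / 3)) (fun j => p (3 * j)) (fun j => p (3 * j + 1))
      (fun j => p (3 * j + 2)) (fun j => p (3 * j + 3)) := by
  obtain ⟨hinj, -, -, hadj⟩ := h
  have heq : ∀ i j, i ≤ l → j ≤ l → (p i = p j ↔ i = j) := fun i j hi hj =>
    ⟨hinj i j hi hj, fun h => h ▸ rfl⟩
  have hsucc : ∀ i < l, G.Adj (p i) (p (i + 1)) := fun i hi =>
    (hadj _ _).2 ⟨i, hi, Or.inl ⟨rfl, rfl⟩⟩
  constructor <;> simp only [Finset.mem_range]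
  · exact fun j hj => hsucc _ (by omega)
  · exact fun j hj => hsucc _ (by omega)
  · exact fun j hj => hsucc _ (by omega)
  · intro j hj h
    obtain ⟨i, hi, h⟩ := (hadj _ _).1 h
    rw [heq _ _ (by omega) (by omega), heq _ _ (by omega) (by omega),
      heq _ _ (by omega) (by omega), heq _ _ (by omega) (by omega)] at h
    omega
  · intro i hi j hj
    refine ⟨?_, ?_, ?_, ?_⟩ <;> rw [Ne, heq _ _ (by omega) (by omega)] <;> omega
  · intro i hi j hj h
    rw [heq _ _ (by omega) (by omega), heq _ _ (by omega) (by omega),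
      heq _ _ (by omega) (by omega)] at h
    omega
  · intro i hi j hj h
    rw [heq _ _ (by omega) (by omega), heq _ _ (by omega) (by omega),
      heq _ _ (by omega) (by omega), heq _ _ (by omega) (by omega)] at h
    omega

/-- A path with `l` edges requires at least `⌊l/3⌋` edge
editions and vertex splittings to be transformed into a disjoint union of
bicliques. -/
theorem path_lower_bound (l : ℕ) (G : BGraph) (p : ℕ → ℕ)
    (hpath : IsPathWith G p l) (L : List Op) (G' : BGraph)
    (happ : ApplySeq true true L G G') (hbic : IsBicliqueUnion G') :
    l / 3 ≤ L.length := by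
  simpa using hpath.isPacking.card_le_length hpath.edgesInVerts happ hbic

end BCE
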